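/- Let $n \ge 2$ be an integer and, for $-1<s<1$, put $$\Gamma_-(s) = \sqrt[n]{\frac{1+s}{1-s}}\;\exp\left(\frac{n-2}{n\sqrt{n-1}}\,\arctan\bigl(s\sqrt{n-1}\bigr)\right).$$ Then $\Gamma_-$ is a strictly increasing bijection of $(-1,1)$ onto $(0,\infty)$. Let $u_- : (0,\infty)\to(-1,1)$ be its inverse, and for $t>0$ define $$H_-(t) = u_-(t)\,\Bigl(u_-(t)^2+\tfrac{1}{n-1}\Bigr)^{\frac1n-\frac12}\bigl(1-u_-(t)^2\bigr)^{-\frac1n}.$$ Then: (i) $H_-(1)=0$; (ii) $H_-(1/t) = -H_-(t)$ for all $t>0$; (iii) $H_-$ is differentiable on $(0,\infty)$ and $t\,H_-'(t)\,u_-(t) = H_-(t)$ for all $t>0$; (iv) $H_-$ solves the characteristic equation $$\Bigl(H_-(t)^2+\frac{t^2H_-'(t)^2}{n-1}\Bigr)^{\frac{n-2}{2}}\bigl(H_-(t)^2-t^2H_-'(t)^2\bigr) = -1 \quad\text{for all } t>0.$$ -/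

import Mathlib

/-- `Γ₋(s) = ((1+s)/(1-s))^(1/n) · exp( ((n-2)/(n√(n-1))) · arctan(s√(n-1)) )`, for `-1 < s < 1`. -/
noncomputable def GammaMinus (n : ℕ) (s : ℝ) : ℝ :=
  ((1 + s) / (1 - s)) ^ ((1 : ℝ) / (n : ℝ)) *
    Real.exp ((((n : ℝ) - 2) / ((n : ℝ) * Real.sqrt ((n : ℝ) - 1))) *
      Real.arctan (s * Real.sqrt ((n : ℝ) - 1)))

/-- `u₋`, the inverse of `Γ₋ : (-1,1) → (0,∞)`; only its values at `t > 0` are meaningful. -/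
noncomputable def uMinus (n : ℕ) : ℝ → ℝ :=
  Function.invFunOn (GammaMinus n) (Set.Ioo (-1 : ℝ) 1)

/-- `H₋(t) = u₋(t) · (u₋(t)² + 1/(n-1))^(1/n - 1/2) · (1 - u₋(t)²)^(-1/n)`, for `t > 0`. -/
noncomputable def HMinus (n : ℕ) (t : ℝ) : ℝ :=
  uMinus n t *
    ((uMinus n t) ^ 2 + 1 / ((n : ℝ) - 1)) ^ ((1 : ℝ) / (n : ℝ) - 1 / 2) *
    (1 - (uMinus n t) ^ 2) ^ (-((1 : ℝ) / (n : ℝ)))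

/-- The characteristic expression
`ℒH(t) = (H(t)² + t²H'(t)²/(n-1))^((n-2)/2) · (H(t)² - t²H'(t)²)`. -/
noncomputable def charExpr (n : ℕ) (H : ℝ → ℝ) (t : ℝ) : ℝ :=
  ((H t) ^ 2 + t ^ 2 * (deriv H t) ^ 2 / ((n : ℝ) - 1)) ^ (((n : ℝ) - 2) / 2) *
    ((H t) ^ 2 - t ^ 2 * (deriv H t) ^ 2)

open Set in
theorem GammaMinus_pos (n : ℕ) {s : ℝ} (hs : s ∈ Ioo (-1 : ℝ) 1) : 0 < GammaMinus n s := by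
  have h1 : 0 < 1 + s := by linarith [hs.1]
  have h2 : 0 < 1 - s := by linarith [hs.2]
  unfold GammaMinus
  positivity

theorem GammaMinus_zero (n : ℕ) : GammaMinus n 0 = 1 := by
  simp [GammaMinus]

open Set in
theorem GammaMinus_neg (n : ℕ) {s : ℝ} (hs : s ∈ Ioo (-1 : ℝ) 1) :
    GammaMinus n (-s) = (GammaMinus n s)⁻¹ := by
  have h1 : 0 < 1 + s := by linarith [hs.1]
  have h2 : 0 < 1 - s := by linarith [hs.2]
  unfold GammaMinus
  rw [mul_inv, ← Real.exp_neg, ← Real.inv_rpow (by positivity), inv_div, neg_mul,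
    Real.arctan_neg, mul_neg, sub_neg_eq_add, ← sub_eq_add_neg]

/-- The logarithmic derivative of `Γ₋`. -/
noncomputable def gammaRate (n : ℕ) (s : ℝ) : ℝ :=
  (1 + s ^ 2) / ((1 - s ^ 2) * (1 + ((n : ℝ) - 1) * s ^ 2))

/-- The quotient `H₋ / u₋` as a function of the value `s` of `u₋`. -/
noncomputable def profileFactor (n : ℕ) (s : ℝ) : ℝ :=
  (s ^ 2 + 1 / ((n : ℝ) - 1)) ^ ((1 : ℝ) / (n : ℝ) - 1 / 2) *
    (1 - s ^ 2) ^ (-((1 : ℝ) / (n : ℝ)))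

theorem HMinus_eq (n : ℕ) (t : ℝ) :
    HMinus n t = uMinus n t * profileFactor n (uMinus n t) := by
  rw [HMinus, profileFactor, mul_assoc]

section

open Set Filter Topology

variable {n : ℕ} {s t : ℝ}

theorem one_sub_sq_pos_of_mem_Ioo (hs : s ∈ Ioo (-1 : ℝ) 1) : 0 < 1 - s ^ 2 := by
  nlinarith [hs.1, hs.2]

theorem one_lt_cast_of_two_le (hn : 2 ≤ n) : (1 : ℝ) < n := by
  exact_mod_cast hn

theorem gammaRate_pos (hn : 2 ≤ n) (hs : s ∈ Ioo (-1 : ℝ) 1) : 0 < gammaRate n s := by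
  have h1 := one_sub_sq_pos_of_mem_Ioo hs
  have h2 : (0 : ℝ) < n - 1 := sub_pos.2 (one_lt_cast_of_two_le hn)
  unfold gammaRate
  positivity

theorem hasDerivAt_GammaMinus (hn : 2 ≤ n) (hs : s ∈ Ioo (-1 : ℝ) 1) :
    HasDerivAt (GammaMinus n) (GammaMinus n s * gammaRate n s) s := by
  have h1 : 0 < 1 + s := by linarith [hs.1]
  have h2 : 0 < 1 - s := by linarith [hs.2]
  have hm : (0 : ℝ) < n - 1 := sub_pos.2 (one_lt_cast_of_two_le hn)
  have hn0 : (0 : ℝ) < n := by linarith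
  have hr : 0 < √((n : ℝ) - 1) := Real.sqrt_pos.2 hm
  have hr2 : √((n : ℝ) - 1) ^ 2 = n - 1 := Real.sq_sqrt hm.le
  have hq : HasDerivAt (fun x : ℝ => (1 + x) / (1 - x)) (2 / (1 - s) ^ 2) s := by
    refine (((hasDerivAt_id s).const_add 1).div
      ((hasDerivAt_id s).const_sub 1) h2.ne').congr_deriv ?_
    simp only [id]
    ring
  have hp := hq.rpow_const (p := (1 : ℝ) / n) (Or.inl (by positivity))
  have ha := ((((hasDerivAt_id s).mul_const √((n : ℝ) - 1)).arctan).const_mul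
    (((n : ℝ) - 2) / ((n : ℝ) * √((n : ℝ) - 1)))).exp
  refine (hp.mul ha).congr_deriv (Eq.symm ?_)
  simp only [id, GammaMinus, gammaRate]
  rw [Real.rpow_sub_one (by positivity), mul_pow, hr2]
  have h3 : 0 < 1 - s ^ 2 := one_sub_sq_pos_of_mem_Ioo hs
  have h4 : 0 < 1 + ((n : ℝ) - 1) * s ^ 2 := by positivity
  have h5 : 0 < 1 + s ^ 2 * ((n : ℝ) - 1) := by positivity
  generalize Real.exp _ = E
  generalize ((1 + s) / (1 - s)) ^ ((1 : ℝ) / n) = A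
  have key : (1 + s ^ 2) / ((1 - s ^ 2) * (1 + ((n : ℝ) - 1) * s ^ 2)) =
      2 / (1 - s) ^ 2 * (1 / n) / ((1 + s) / (1 - s)) +
      ((n : ℝ) - 2) / (n * √((n : ℝ) - 1)) *
        (1 / (1 + s ^ 2 * ((n : ℝ) - 1)) * (1 * √((n : ℝ) - 1))) := by
    have e1 : 2 / (1 - s) ^ 2 * (1 / (n : ℝ)) / ((1 + s) / (1 - s)) =
        2 / (n * (1 - s ^ 2)) := by
      rw [show 1 - s ^ 2 = (1 - s) * (1 + s) by ring]
      field_simp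
    have e2 : ((n : ℝ) - 2) / (n * √((n : ℝ) - 1)) *
        (1 / (1 + s ^ 2 * ((n : ℝ) - 1)) * (1 * √((n : ℝ) - 1))) =
        ((n : ℝ) - 2) / (n * (1 + ((n : ℝ) - 1) * s ^ 2)) := by
      rw [mul_comm (s ^ 2)]
      field_simp
    rw [e1, e2, div_add_div _ _ (by positivity) (by positivity),
      div_eq_div_iff (by positivity) (by positivity)]
    ring
  rw [key]
  ring

theorem strictMonoOn_GammaMinus (hn : 2 ≤ n) :
    StrictMonoOn (GammaMinus n) (Ioo (-1 : ℝ) 1) := by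
  refine strictMonoOn_of_deriv_pos (convex_Ioo _ _)
    (fun s hs => (hasDerivAt_GammaMinus hn hs).continuousAt.continuousWithinAt) ?_
  intro s hs
  rw [interior_Ioo] at hs
  rw [(hasDerivAt_GammaMinus hn hs).deriv]
  exact mul_pos (GammaMinus_pos n hs) (gammaRate_pos hn hs)

theorem exists_GammaMinus_eq_of_one_le (hn : 2 ≤ n) {y : ℝ} (hy : 1 ≤ y) :
    ∃ s ∈ Ioo (-1 : ℝ) 1, GammaMinus n s = y := by
  have hn1 := one_lt_cast_of_two_le hn
  have hyn : 1 ≤ y ^ n := one_le_pow₀ hy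
  have hb0 : 0 ≤ (y ^ n - 1) / (y ^ n + 1) := div_nonneg (by linarith) (by linarith)
  have hb1 : (y ^ n - 1) / (y ^ n + 1) < 1 := by
    rw [div_lt_one (by linarith)]
    linarith
  have hle : y ≤ GammaMinus n ((y ^ n - 1) / (y ^ n + 1)) := by
    have hq : (1 + (y ^ n - 1) / (y ^ n + 1)) / (1 - (y ^ n - 1) / (y ^ n + 1)) = y ^ n := by
      have h1 : y ^ n + 1 ≠ 0 := by linarith
      have h2 : 1 - (y ^ n - 1) / (y ^ n + 1) ≠ 0 := by linarith
      rw [div_eq_iff h2]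
      field_simp
      ring
    unfold GammaMinus
    rw [hq, one_div, Real.pow_rpow_inv_natCast (by linarith) (by omega)]
    refine le_mul_of_one_le_right (by linarith) (Real.one_le_exp ?_)
    have h2 : (2 : ℝ) ≤ n := by exact_mod_cast hn
    have ha : 0 ≤ Real.arctan ((y ^ n - 1) / (y ^ n + 1) * √((n : ℝ) - 1)) :=
      Real.arctan_nonneg.2 (by positivity)
    exact mul_nonneg (div_nonneg (by linarith) (by positivity)) ha
  have hsub : Icc 0 ((y ^ n - 1) / (y ^ n + 1)) ⊆ Ioo (-1 : ℝ) 1 := fun x hx =>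
    ⟨by linarith [hx.1], hx.2.trans_lt hb1⟩
  obtain ⟨s, hs, rfl⟩ := intermediate_value_Icc hb0
    (fun x hx => (hasDerivAt_GammaMinus hn (hsub hx)).continuousAt.continuousWithinAt)
    ⟨(GammaMinus_zero n).le.trans hy, hle⟩
  exact ⟨s, hsub hs, rfl⟩

theorem neg_mem_Ioo_neg_one_one (hs : s ∈ Ioo (-1 : ℝ) 1) : -s ∈ Ioo (-1 : ℝ) 1 :=
  ⟨by linarith [hs.2], by linarith [hs.1]⟩

theorem bijOn_GammaMinus (hn : 2 ≤ n) :
    BijOn (GammaMinus n) (Ioo (-1 : ℝ) 1) (Ioi (0 : ℝ)) := by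
  refine ⟨fun s hs => GammaMinus_pos n hs, (strictMonoOn_GammaMinus hn).injOn, ?_⟩
  intro y hy
  rcases le_total 1 y with h | h
  · exact exists_GammaMinus_eq_of_one_le hn h
  · obtain ⟨s, hs, h⟩ := exists_GammaMinus_eq_of_one_le hn ((one_le_inv₀ hy).2 h)
    exact ⟨-s, neg_mem_Ioo_neg_one_one hs, by rw [GammaMinus_neg n hs, h, inv_inv]⟩

theorem uMinus_mem (hn : 2 ≤ n) (ht : 0 < t) : uMinus n t ∈ Ioo (-1 : ℝ) 1 :=
  Function.invFunOn_mem ((bijOn_GammaMinus hn).surjOn ht)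

theorem GammaMinus_uMinus (hn : 2 ≤ n) (ht : 0 < t) : GammaMinus n (uMinus n t) = t :=
  Function.invFunOn_eq ((bijOn_GammaMinus hn).surjOn ht)

theorem uMinus_eq_of_GammaMinus_eq (hn : 2 ≤ n) (hs : s ∈ Ioo (-1 : ℝ) 1)
    (h : GammaMinus n s = t) : uMinus n t = s := by
  have ht : 0 < t := h ▸ GammaMinus_pos n hs
  exact (bijOn_GammaMinus hn).injOn (uMinus_mem hn ht) hs ((GammaMinus_uMinus hn ht).trans h.symm)

theorem uMinus_one (hn : 2 ≤ n) : uMinus n 1 = 0 :=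
  uMinus_eq_of_GammaMinus_eq hn (by simp) (GammaMinus_zero n)

theorem uMinus_inv (hn : 2 ≤ n) (ht : 0 < t) : uMinus n t⁻¹ = -uMinus n t :=
  uMinus_eq_of_GammaMinus_eq hn (neg_mem_Ioo_neg_one_one (uMinus_mem hn ht))
    (by rw [GammaMinus_neg n (uMinus_mem hn ht), GammaMinus_uMinus hn ht])

theorem strictMonoOn_uMinus (hn : 2 ≤ n) : StrictMonoOn (uMinus n) (Ioi 0) := by
  intro a ha b hb hab
  rw [← (strictMonoOn_GammaMinus hn).lt_iff_lt (uMinus_mem hn ha) (uMinus_mem hn hb),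
    GammaMinus_uMinus hn ha, GammaMinus_uMinus hn hb]
  exact hab

theorem continuousAt_uMinus (hn : 2 ≤ n) (ht : 0 < t) : ContinuousAt (uMinus n) t := by
  refine (strictMonoOn_uMinus hn).continuousAt_of_image_mem_nhds (Ioi_mem_nhds ht) ?_
  refine mem_of_superset (Ioo_mem_nhds (uMinus_mem hn ht).1 (uMinus_mem hn ht).2) ?_
  intro s hs
  exact ⟨GammaMinus n s, GammaMinus_pos n hs, uMinus_eq_of_GammaMinus_eq hn hs rfl⟩

theorem hasDerivAt_uMinus (hn : 2 ≤ n) (ht : 0 < t) :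
    HasDerivAt (uMinus n) (t * gammaRate n (uMinus n t))⁻¹ t := by
  have hu := uMinus_mem hn ht
  have h := hasDerivAt_GammaMinus hn hu
  rw [GammaMinus_uMinus hn ht] at h
  refine h.of_local_left_inverse (continuousAt_uMinus hn ht)
    (mul_pos ht (gammaRate_pos hn hu)).ne' ?_
  filter_upwards [Ioi_mem_nhds ht] with x hx using GammaMinus_uMinus hn hx

theorem hasDerivAt_mul_profileFactor (hn : 2 ≤ n) (hs : s ∈ Ioo (-1 : ℝ) 1) :
    HasDerivAt (fun x => x * profileFactor n x) (profileFactor n s * gammaRate n s) s := by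
  have h1 := one_sub_sq_pos_of_mem_Ioo hs
  have hm : (0 : ℝ) < n - 1 := sub_pos.2 (one_lt_cast_of_two_le hn)
  have hn0 : (0 : ℝ) < n := by linarith
  have h2 : 0 < s ^ 2 + 1 / ((n : ℝ) - 1) := by positivity
  have hA := ((hasDerivAt_pow 2 s).add_const (1 / ((n : ℝ) - 1))).rpow_const
    (p := (1 : ℝ) / n - 1 / 2) (Or.inl h2.ne')
  have hB := ((hasDerivAt_pow 2 s).const_sub 1).rpow_const
    (p := -((1 : ℝ) / n)) (Or.inl h1.ne')
  refine ((hasDerivAt_id s).mul (hA.mul hB)).congr_deriv (Eq.symm ?_)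
  simp only [id, profileFactor, gammaRate, Pi.mul_apply]
  rw [Real.rpow_sub_one h2.ne', Real.rpow_sub_one h1.ne']
  generalize (1 - s ^ 2) ^ (-((1 : ℝ) / n)) = B
  generalize (s ^ 2 + 1 / ((n : ℝ) - 1)) ^ ((1 : ℝ) / n - 1 / 2) = A
  have h4 : 0 < 1 + ((n : ℝ) - 1) * s ^ 2 := by positivity
  have h3 : s ^ 2 + 1 / ((n : ℝ) - 1) = (1 + ((n : ℝ) - 1) * s ^ 2) / (n - 1) := by
    field_simp
    ring
  rw [h3]
  generalize hD : 1 + ((n : ℝ) - 1) * s ^ 2 = D at *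
  generalize hC : 1 - s ^ 2 = C at *
  push_cast
  field_simp
  subst hD hC
  ring

theorem hasDerivAt_HMinus (hn : 2 ≤ n) (ht : 0 < t) :
    HasDerivAt (HMinus n) (profileFactor n (uMinus n t) / t) t := by
  have hu := uMinus_mem hn ht
  have h := (hasDerivAt_mul_profileFactor hn hu).comp t (hasDerivAt_uMinus hn ht)
  have he : HMinus n = (fun x => x * profileFactor n x) ∘ uMinus n := funext (HMinus_eq n)
  rw [he]
  refine h.congr_deriv ?_
  have := (gammaRate_pos hn hu).ne'
  field_simp

theorem profileFactor_identity (hn : 2 ≤ n) (hs : s ∈ Ioo (-1 : ℝ) 1) :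
    ((s * profileFactor n s) ^ 2 + profileFactor n s ^ 2 / ((n : ℝ) - 1)) ^ (((n : ℝ) - 2) / 2) *
      ((s * profileFactor n s) ^ 2 - profileFactor n s ^ 2) = -1 := by
  have h1 := one_sub_sq_pos_of_mem_Ioo hs
  have hm : (0 : ℝ) < n - 1 := sub_pos.2 (one_lt_cast_of_two_le hn)
  have hn0 : (0 : ℝ) < n := by linarith
  have h2 : 0 < s ^ 2 + 1 / ((n : ℝ) - 1) := by positivity
  have hP : profileFactor n s = (s ^ 2 + 1 / ((n : ℝ) - 1)) ^ ((1 : ℝ) / (n : ℝ) - 1 / 2) *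
    (1 - s ^ 2) ^ (-((1 : ℝ) / (n : ℝ))) := rfl
  have hPpos : 0 < profileFactor n s := by rw [hP]; positivity
  have e1 : (s * profileFactor n s) ^ 2 + profileFactor n s ^ 2 / ((n : ℝ) - 1) =
      profileFactor n s ^ (2 : ℝ) * (s ^ 2 + 1 / ((n : ℝ) - 1)) := by
    rw [Real.rpow_two]
    ring
  have e2 : (s * profileFactor n s) ^ 2 - profileFactor n s ^ 2 =
      -(profileFactor n s ^ (2 : ℝ) * (1 - s ^ 2)) := by
    rw [Real.rpow_two]
    ring
  have hPn : profileFactor n s ^ (n : ℝ) =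
      (s ^ 2 + 1 / ((n : ℝ) - 1)) ^ (-(((n : ℝ) - 2) / 2)) * (1 - s ^ 2) ^ (-1 : ℝ) := by
    rw [hP, Real.mul_rpow (by positivity) (by positivity), ← Real.rpow_mul h2.le,
      ← Real.rpow_mul h1.le]
    congr 2 <;> field_simp
    ring
  rw [e1, e2, Real.mul_rpow (by positivity) h2.le, ← Real.rpow_mul hPpos.le]
  have e3 : profileFactor n s ^ (n : ℝ) =
      profileFactor n s ^ (2 * (((n : ℝ) - 2) / 2)) * profileFactor n s ^ (2 : ℝ) := by
    rw [← Real.rpow_add hPpos]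
    congr 1
    ring
  have e4 : profileFactor n s ^ (n : ℝ) * (s ^ 2 + 1 / ((n : ℝ) - 1)) ^ (((n : ℝ) - 2) / 2) *
      (1 - s ^ 2) = 1 := by
    rw [hPn, Real.rpow_neg h2.le, Real.rpow_neg_one]
    have := (Real.rpow_pos_of_pos h2 (((n : ℝ) - 2) / 2)).ne'
    field_simp
  rw [e3] at e4
  linear_combination -e4

end

theorem stmt9 (n : ℕ) (hn : 2 ≤ n) :
    StrictMonoOn (GammaMinus n) (Set.Ioo (-1 : ℝ) 1) ∧
    Set.BijOn (GammaMinus n) (Set.Ioo (-1 : ℝ) 1) (Set.Ioi (0 : ℝ)) ∧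
    HMinus n 1 = 0 ∧
    (∀ t : ℝ, 0 < t → HMinus n (1 / t) = -HMinus n t) ∧
    (∀ t : ℝ, 0 < t → DifferentiableAt ℝ (HMinus n) t ∧
      t * deriv (HMinus n) t * uMinus n t = HMinus n t) ∧
    (∀ t : ℝ, 0 < t → charExpr n (HMinus n) t = -1) := by
  refine ⟨strictMonoOn_GammaMinus hn, bijOn_GammaMinus hn, ?_, fun t ht => ?_,
    fun t ht => ⟨(hasDerivAt_HMinus hn ht).differentiableAt, ?_⟩, fun t ht => ?_⟩
  · rw [HMinus_eq, uMinus_one hn, zero_mul]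
  · rw [one_div, HMinus_eq, HMinus_eq, uMinus_inv hn ht, profileFactor, profileFactor, neg_sq,
      neg_mul]
  · rw [(hasDerivAt_HMinus hn ht).deriv, HMinus_eq, mul_div_cancel₀ _ ht.ne', mul_comm]
  · have h := profileFactor_identity hn (uMinus_mem hn ht)
    rw [charExpr, (hasDerivAt_HMinus hn ht).deriv, HMinus_eq, ← mul_pow,
      mul_div_cancel₀ _ ht.ne']
    exact h
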